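/- Let a, b, c ≥ 1 be integers and let γ > 0. Then there exist η > 0 and n₀ such that for all n ≥ n₀ the following holds: if H is a 3-uniform hypergraph on an n-element vertex set V with minimum vertex degree δ(H) ≥ (6 − 4√2 + γ)·C(n,2), then for every vertex v of H, the number of copies of K³_{a,b,c} containing v is at least η·n^{a+b+c−1}. -/

import Mathlib

open Finset in
lemma aux_pow {X W : Type*} [Fintype X] [Fintype W] (F : X → W → ℝ) (hF : ∀ x w, 0 ≤ F x w)
    (η : ℝ) (hη : 0 ≤ η) (a : ℕ)
    (h : η * (Fintype.card X * Fintype.card W) ≤ ∑ x, ∑ w, F x w) :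
    η ^ a * ((Fintype.card X : ℝ) ^ a * Fintype.card W) ≤
      ∑ f : Fin a → X, ∑ w, ∏ i, F (f i) w := by
  rw [Finset.sum_comm] at h ⊢
  have e : ∀ w, ∑ f : Fin a → X, ∏ i, F (f i) w = (∑ x, F x w) ^ a := by
    intro w
    rw [Fintype.sum_pow]
  simp_rw [e]
  rcases a with _ | k
  · simp
  rcases Nat.eq_zero_or_pos (Fintype.card W) with h0 | h0
  · rw [h0]
    simp only [Nat.cast_zero, mul_zero]
    exact Finset.sum_nonneg fun w _ => pow_nonneg (Finset.sum_nonneg fun x _ => hF x w) _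
  have h1 := pow_sum_div_card_le_sum_pow (s := (Finset.univ : Finset W))
    (f := fun w => ∑ x, F x w) (fun w _ => Finset.sum_nonneg fun x _ => hF x w) k
  refine le_trans ?_ h1
  have hW : (0 : ℝ) < Fintype.card W := by exact_mod_cast h0
  rw [Finset.card_univ, le_div_iff₀ (by positivity)]
  calc _ = (η * (Fintype.card X * Fintype.card W)) ^ (k+1) := by ring
    _ ≤ _ := by gcongr

lemma aux_count {V : Type*} [Fintype V] (F : V → V → V → ℝ) (hF : ∀ x y z, 0 ≤ F x y z)
    (η : ℝ) (hη : 0 ≤ η) (a b c : ℕ)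
    (h : η * (Fintype.card V : ℝ) ^ 3 ≤ ∑ x, ∑ y, ∑ z, F x y z) :
    ((η ^ a) ^ b) ^ c * (Fintype.card V : ℝ) ^ (a + b + c) ≤
      ∑ f : Fin a → V, ∑ g : Fin b → V, ∑ h : Fin c → V,
        ∏ k, ∏ j, ∏ i, F (f i) (g j) (h k) := by
  have h1 := aux_pow (fun (x : V) (w : V × V) => F x w.1 w.2) (fun _ _ => hF _ _ _) η hη a (by
    simp only [Fintype.sum_prod_type, Fintype.card_prod]
    refine le_trans (le_of_eq ?_) h
    push_cast; ring)
  have h2 := aux_pow (fun (y : V) (w : (Fin a → V) × V) => ∏ i, F (w.1 i) y w.2)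
    (fun _ _ => Finset.prod_nonneg fun _ _ => hF _ _ _) (η ^ a) (by positivity) b (by
    simp only [Fintype.sum_prod_type, Fintype.card_prod] at h1 ⊢
    rw [Finset.sum_comm]
    refine le_trans (le_of_eq ?_) h1
    simp only [Fintype.card_fun, Fintype.card_fin]
    push_cast; ring)
  have h3 := aux_pow (fun (z : V) (w : (Fin a → V) × (Fin b → V)) => ∏ j, ∏ i, F (w.1 i) (w.2 j) z)
    (fun _ _ => Finset.prod_nonneg fun _ _ => Finset.prod_nonneg fun _ _ => hF _ _ _)
    ((η ^ a) ^ b) (by positivity) c (by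
    simp only [Fintype.sum_prod_type, Fintype.card_prod] at h2 ⊢
    rw [Finset.sum_comm]
    refine le_trans (le_of_eq ?_) (h2.trans (le_of_eq ?_))
    · simp only [Fintype.card_fun, Fintype.card_fin]
      push_cast; ring
    · rw [Finset.sum_comm]
      refine Finset.sum_congr rfl fun f _ => ?_
      rw [Finset.sum_comm])
  simp only [Fintype.sum_prod_type, Fintype.card_prod] at h3
  refine le_trans (le_of_eq ?_) (h3.trans (le_of_eq ?_))
  · simp only [Fintype.card_fun, Fintype.card_fin]
    push_cast; ring
  · rw [Finset.sum_comm]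
    refine Finset.sum_congr rfl fun f _ => ?_
    rw [Finset.sum_comm]

open Classical in
lemma aux_noninj {V : Type*} [Fintype V] (k : ℕ) :
    (Finset.univ.filter (fun f : Fin k → V => ¬ Function.Injective f)).card * Fintype.card V
      ≤ k ^ 2 * Fintype.card V ^ k := by
  have h1 : (Finset.univ.filter (fun f : Fin k → V => ¬ Function.Injective f)) ⊆
      ((Finset.univ : Finset (Fin k × Fin k)).filter (fun p => p.1 ≠ p.2)).biUnion
        (fun p => Finset.univ.filter (fun f : Fin k → V => f p.1 = f p.2)) := by
    intro f hf
    have hf := (Finset.mem_filter.1 hf).2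
    unfold Function.Injective at hf
    push Not at hf
    obtain ⟨i, j, hij, hne⟩ := hf
    simp only [Finset.mem_biUnion, Finset.mem_filter, Finset.mem_univ, true_and]
    exact ⟨(i, j), hne, hij⟩
  have h2 : ∀ p ∈ (Finset.univ : Finset (Fin k × Fin k)).filter (fun p => p.1 ≠ p.2),
      (Finset.univ.filter (fun f : Fin k → V => f p.1 = f p.2)).card * Fintype.card V
        ≤ Fintype.card V ^ k := by
    rintro ⟨i, j⟩ hij
    simp only [Finset.mem_filter, Finset.mem_univ, true_and] at hij
    have : Fintype.card V ^ k = (Finset.univ : Finset (Fin k → V)).card := by simp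
    rw [this, ← Finset.card_univ, ← Finset.card_product]
    apply Finset.card_le_card_of_injOn (fun q => Function.update q.1 i q.2) (by simp)
    rintro ⟨f, u⟩ hf ⟨g, w⟩ hg hfg
    simp only [Finset.coe_product, Finset.coe_filter, Finset.coe_univ, Set.mem_prod,
      Set.mem_ofPred_eq, Finset.mem_univ, true_and] at hf hg hfg
    have hu : u = w := by simpa using congrFun hfg i
    have hne : ∀ l, l ≠ i → f l = g l := by
      intro l hl
      simpa [hl] using congrFun hfg l
    have : f = g := by
      funext l
      by_cases hl : l = i
      · subst hl
        rw [hf.1, hg.1]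
        exact hne _ (Ne.symm hij)
      · exact hne l hl
    rw [this, hu]
  calc _ ≤ (∑ p ∈ (Finset.univ : Finset (Fin k × Fin k)).filter (fun p => p.1 ≠ p.2),
      (Finset.univ.filter (fun f : Fin k → V => f p.1 = f p.2)).card) * Fintype.card V := by
        gcongr
        exact (Finset.card_le_card h1).trans Finset.card_biUnion_le
    _ ≤ ∑ p ∈ (Finset.univ : Finset (Fin k × Fin k)).filter (fun p => p.1 ≠ p.2),
        Fintype.card V ^ k := by
        rw [Finset.sum_mul]
        exact Finset.sum_le_sum h2
    _ ≤ _ := by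
        rw [Finset.sum_const, smul_eq_mul]
        gcongr
        refine (Finset.card_filter_le _ _).trans ?_
        simp [sq]

lemma aux_deg {V : Type*} [Fintype V] [DecidableEq V] (H : Finset (Finset V))
    (hH : ∀ e ∈ H, e.card = 3) (x : V) :
    2 * (H.filter (fun e => x ∈ e)).card ≤
      (Finset.univ.filter (fun p : V × V => ({x, p.1, p.2} : Finset V) ∈ H)).card := by
  apply Finset.mul_card_image_le_card_of_maps_to
    (f := fun p : V × V => ({x, p.1, p.2} : Finset V))
  · intro p hp
    simp only [Finset.mem_filter, Finset.mem_univ, true_and] at hp ⊢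
    exact ⟨hp, by simp⟩
  · intro e he
    simp only [Finset.mem_filter] at he
    obtain ⟨heH, hx⟩ := he
    have h2 : (e.erase x).card = 2 := by rw [Finset.card_erase_of_mem hx, hH e heH]
    obtain ⟨y, z, hyz, h3⟩ := Finset.card_eq_two.1 h2
    have h4 : ({x, y, z} : Finset V) = e := by
      rw [← Finset.insert_erase hx, h3]
    have h5 : ({x, z, y} : Finset V) = e := by
      rw [← h4, Finset.pair_comm]
    have h6 : ({(y, z), (z, y)} : Finset (V × V)).card = 2 := by
      rw [Finset.card_pair]
      intro h
      exact hyz (congrArg Prod.fst h)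
    rw [← h6]
    apply Finset.card_le_card
    intro p hp
    simp only [Finset.mem_insert, Finset.mem_singleton] at hp
    simp only [Finset.mem_filter, Finset.mem_univ, true_and]
    rcases hp with rfl | rfl
    · exact ⟨by rw [h4]; exact heH, h4⟩
    · exact ⟨by rw [h5]; exact heH, h5⟩
lemma aux_arith (d ε k : ℝ) (hε : 0 < ε) (h1 : 6 - 4 * √2 + 2 * ε ≤ d)
    (hk1 : d - ε ≤ k) (hk0 : k ≤ 1) (hk2 : d - ε ≤ (1 - k) ^ 2)
    (hk3 : 2 * d ≤ (1 - k) ^ 2 + 2 * k ^ 2 + 3 * ε) : False := by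
  have h2 : √2 ^ 2 = 2 := Real.sq_sqrt (by norm_num)
  have h3 : √2 < 1.415 := by
    rw [Real.sqrt_lt' (by norm_num)]; norm_num
  have h4 : 1.414 < √2 := by
    apply Real.lt_sqrt_of_sq_lt; norm_num
  have h5 : 2 - √2 ≤ 1 - k := by
    apply le_of_sq_le_sq _ (by linarith)
    nlinarith
  have h6 : 0 ≤ (√2 - 1 - k) * (k - (5 / 3 - √2)) := by
    apply mul_nonneg <;> linarith
  nlinarith

open Classical in
lemma aux_key {V : Type*} [Fintype V] (t : V → V → V → ℝ) (ht : ∀ x y z, t x y z = 0 ∨ t x y z = 1)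
    (h12 : ∀ x y z, t x y z = t y x z) (h23 : ∀ x y z, t x y z = t x z y)
    (d ε : ℝ) (hε : 0 < ε) (hε1 : ε < 1) (hd : 6 - 4 * √2 + 2 * ε ≤ d)
    (hdeg : ∀ x, d * (Fintype.card V : ℝ) ^ 2 ≤ ∑ y, ∑ z, t x y z) (v : V) :
    ε ^ 2 / 3 * (Fintype.card V : ℝ) ^ 3 ≤ ∑ x, ∑ y, ∑ z, t x y z * t v y z := by
  by_contra hcon
  push Not at hcon
  obtain ⟨n, hn⟩ : ∃ n : ℝ, n = (Fintype.card V : ℝ) := ⟨_, rfl⟩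
  rw [← hn] at hcon
  simp only [← hn] at hdeg
  have hnpos : 0 < n := by
    rw [hn]; exact_mod_cast Fintype.card_pos_iff.2 ⟨v⟩
  obtain ⟨l, hl⟩ : ∃ l : V → V → ℝ, l = t v := ⟨_, rfl⟩
  rw [← hl] at hcon
  have hl01 : ∀ y z, l y z = 0 ∨ l y z = 1 := by rw [hl]; exact ht v
  have hl0 : ∀ y z, 0 ≤ l y z := fun y z => by rcases hl01 y z with h | h <;> simp [h]
  have hl1 : ∀ y z, l y z ≤ 1 := fun y z => by rcases hl01 y z with h | h <;> simp [h]
  have ht0 : ∀ x y z, 0 ≤ t x y z := fun x y z => by rcases ht x y z with h | h <;> simp [h]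
  have hls : ∀ y z, l y z = l z y := by rw [hl]; exact h23 v
  have hldeg : d * n ^ 2 ≤ ∑ y, ∑ z, l y z := by rw [hl]; exact hdeg v
  let deg : V → ℝ := fun y => ∑ z, l y z
  have hdegn : ∀ y, deg y ≤ n := by
    intro y
    calc deg y ≤ ∑ z : V, (1 : ℝ) := Finset.sum_le_sum fun z _ => hl1 y z
      _ = n := by simp [hn]
  have hdeg0 : ∀ y, 0 ≤ deg y := fun y => Finset.sum_nonneg fun z _ => hl0 y z
  let bad : V → ℝ := fun x => ∑ y, ∑ z, t x y z * (l y z + l x y + l x z)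
  have hbad0 : ∀ x, 0 ≤ bad x := fun x => Finset.sum_nonneg fun y _ => Finset.sum_nonneg fun z _ =>
    mul_nonneg (ht0 _ _ _) (add_nonneg (add_nonneg (hl0 _ _) (hl0 _ _)) (hl0 _ _))
  have hbadsum : ∑ x, bad x = 3 * ∑ x, ∑ y, ∑ z, t x y z * l y z := by
    have e2 : ∑ x, ∑ y, ∑ z, t x y z * l x z = ∑ x, ∑ y, ∑ z, t x y z * l y z := by
      rw [Finset.sum_comm]
      exact Finset.sum_congr rfl fun x _ => Finset.sum_congr rfl fun y _ =>
        Finset.sum_congr rfl fun z _ => by rw [h12]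
    have e1 : ∑ x, ∑ y, ∑ z, t x y z * l x y = ∑ x, ∑ y, ∑ z, t x y z * l y z := by
      rw [← e2]
      refine Finset.sum_congr rfl fun x _ => ?_
      rw [Finset.sum_comm]
      exact Finset.sum_congr rfl fun y _ =>
        Finset.sum_congr rfl fun z _ => by rw [h23]
    simp only [bad, mul_add, Finset.sum_add_distrib]
    rw [e1, e2]; ring
  let B : Finset V := Finset.univ.filter (fun x => ε * n ^ 2 < bad x)
  have hB : (B.card : ℝ) < ε * n := by
    have h1 : (B.card : ℝ) * (ε * n ^ 2) ≤ ∑ x, bad x := by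
      calc _ = ∑ x ∈ B, ε * n ^ 2 := by simp
        _ ≤ ∑ x ∈ B, bad x := Finset.sum_le_sum fun x hx => (Finset.mem_filter.1 hx).2.le
        _ ≤ _ := Finset.sum_le_sum_of_subset_of_nonneg (Finset.subset_univ _) fun x _ _ => hbad0 x
    have h2 : (B.card : ℝ) * (ε * n ^ 2) < (ε * n) * (ε * n ^ 2) := by
      rw [hbadsum] at h1
      nlinarith
    exact lt_of_mul_lt_mul_right h2 (by positivity)
  have hgood : (Finset.univ.filter (fun x => x ∉ B)).Nonempty := by
    by_contra hne
    rw [Finset.not_nonempty_iff_eq_empty] at hne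
    have : B = Finset.univ := by
      ext x
      simp only [Finset.mem_univ, iff_true]
      by_contra hx
      have : x ∈ (Finset.univ.filter (fun x => x ∉ B)) := by simp [hx]
      rw [hne] at this
      simp at this
    rw [this, Finset.card_univ, ← hn] at hB
    nlinarith
  obtain ⟨x, hxg, hmax⟩ := Finset.exists_max_image _ deg hgood
  have hxB : x ∉ B := (Finset.mem_filter.1 hxg).2
  have hxbad : bad x ≤ ε * n ^ 2 := by
    by_contra h
    exact hxB (Finset.mem_filter.2 ⟨Finset.mem_univ _, not_le.1 h⟩)
  have hdegle : ∀ y, deg y ≤ deg x + n * (if y ∈ B then 1 else 0) := by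
    intro y
    split_ifs with hy
    · have := hdegn y; have := hdeg0 x; linarith
    · have := hmax y (by simp [hy]); linarith
  have hBsum : ∑ y : V, (if y ∈ B then (1:ℝ) else 0) = B.card := by simp
  have k1 : d * n ^ 2 ≤ n * deg x + ε * n ^ 2 := by
    calc d * n ^ 2 ≤ ∑ y, deg y := hldeg
      _ ≤ ∑ y, (deg x + n * (if y ∈ B then 1 else 0)) := Finset.sum_le_sum fun y _ => hdegle y
      _ = n * deg x + n * B.card := by
        rw [Finset.sum_add_distrib, ← Finset.mul_sum, hBsum]; simp [hn]
      _ ≤ _ := by nlinarith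
  have hsq : ∑ y, ∑ z, (1 - l x y) * (1 - l x z) = (n - deg x) ^ 2 := by
    rw [← Finset.sum_mul_sum]
    simp only [Finset.sum_sub_distrib, deg]
    simp [hn, sq]
  have k2 : d * n ^ 2 ≤ ε * n ^ 2 + (n - deg x) ^ 2 := by
    calc d * n ^ 2 ≤ ∑ y, ∑ z, t x y z := hdeg x
      _ ≤ ∑ y, ∑ z, (t x y z * (l y z + l x y + l x z) + (1 - l x y) * (1 - l x z)) := by
        refine Finset.sum_le_sum fun y _ => Finset.sum_le_sum fun z _ => ?_
        rcases ht x y z with h | h <;> rcases hl01 x y with h' | h' <;>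
          rcases hl01 x z with h'' | h'' <;> rcases hl01 y z with h3 | h3 <;>
          rw [h, h', h'', h3] <;> norm_num
      _ = bad x + (n - deg x) ^ 2 := by
        simp only [Finset.sum_add_distrib]
        rw [hsq]
      _ ≤ _ := by linarith
  have hs2 : ∑ y, l x y * deg y ≤ deg x ^ 2 + ε * n ^ 2 := by
    calc ∑ y, l x y * deg y ≤ ∑ y, (l x y * deg x + n * (if y ∈ B then 1 else 0)) := by
          refine Finset.sum_le_sum fun y _ => ?_
          have := hdegle y
          rcases hl01 x y with h | h <;> rw [h]
          · split_ifs <;> linarith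
          · linarith
      _ = deg x ^ 2 + n * B.card := by
        rw [Finset.sum_add_distrib, ← Finset.mul_sum, hBsum, ← Finset.sum_mul]; simp only [deg, sq]
      _ ≤ _ := by nlinarith
  have k3 : 2 * (d * n ^ 2) ≤ ε * n ^ 2 + (n - deg x) ^ 2 + 2 * (deg x ^ 2 + ε * n ^ 2) := by
    calc 2 * (d * n ^ 2) ≤ ∑ y, ∑ z, (t x y z + l y z) := by
          simp only [Finset.sum_add_distrib]
          have := hdeg x
          linarith
      _ ≤ ∑ y, ∑ z, (t x y z * (l y z + l x y + l x z) + (1 - l x y) * (1 - l x z) +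
            l x y * l y z + l x z * l y z) := by
        refine Finset.sum_le_sum fun y _ => Finset.sum_le_sum fun z _ => ?_
        rcases ht x y z with h | h <;> rcases hl01 x y with h' | h' <;>
          rcases hl01 x z with h'' | h'' <;> rcases hl01 y z with h3 | h3 <;>
          rw [h, h', h'', h3] <;> norm_num
      _ = bad x + (n - deg x) ^ 2 + 2 * ∑ y, l x y * deg y := by
        have e1 : ∑ y, ∑ z, l x y * l y z = ∑ y, l x y * deg y := by
          simp only [deg, Finset.mul_sum]
        have e2 : ∑ y, ∑ z, l x z * l y z = ∑ y, l x y * deg y := by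
          rw [← e1, Finset.sum_comm]
          exact Finset.sum_congr rfl fun y _ => Finset.sum_congr rfl fun z _ => by rw [hls z y]
        simp only [Finset.sum_add_distrib]
        rw [hsq, e1, e2]; ring
      _ ≤ _ := by linarith
  have hn2 : 0 < n ^ 2 := by positivity
  obtain ⟨k, hk⟩ : ∃ k, deg x = k * n := ⟨deg x / n, by field_simp⟩
  rw [hk] at k1 k2 k3
  refine aux_arith d ε k hε hd ?_ ?_ ?_ ?_
  · refine le_of_mul_le_mul_right ?_ hn2
    linarith
  · have := hdegn x
    rw [hk] at this
    nlinarith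
  · refine le_of_mul_le_mul_right ?_ hn2
    linarith
  · refine le_of_mul_le_mul_right ?_ hn2
    linarith

lemma aux_final {V : Type*} [Fintype V] [DecidableEq V] (H : Finset (Finset V))
    (hH : ∀ e ∈ H, e.card = 3) (v : V) (a b c : ℕ) (hb : 1 ≤ b) (hc : 1 ≤ c)
    (η : ℝ) (hη : 0 < η)
    (h : η * (Fintype.card V : ℝ) ^ 3 ≤ ∑ x, ∑ y, ∑ z,
      (if x ≠ v ∧ ({x, y, z} : Finset V) ∈ H ∧ ({v, y, z} : Finset V) ∈ H then (1 : ℝ) else 0))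
    (hn : 2 * (((a + 1 : ℕ) : ℝ) ^ 2 + (b : ℝ) ^ 2 + (c : ℝ) ^ 2)
      ≤ ((η ^ (a + 1)) ^ b) ^ c * (Fintype.card V : ℝ)) :
    ((η ^ (a + 1)) ^ b) ^ c / 2 * (Fintype.card V : ℝ) ^ (a + b + c) ≤
      (((a + 1) ^ a * b ^ b * c ^ c : ℕ) : ℝ) *
       (({p : Finset V × Finset V × Finset V |
              p.1.card = a + 1 ∧ p.2.1.card = b ∧ p.2.2.card = c ∧
              Disjoint p.1 p.2.1 ∧ Disjoint p.1 p.2.2 ∧ Disjoint p.2.1 p.2.2 ∧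
              (v ∈ p.1 ∨ v ∈ p.2.1 ∨ v ∈ p.2.2) ∧
              ∀ x ∈ p.1, ∀ y ∈ p.2.1, ∀ z ∈ p.2.2,
                ({x, y, z} : Finset V) ∈ H}.ncard : ℝ)) := by
  classical
  have hcnt := aux_count (fun x y z : V =>
    (if x ≠ v ∧ ({x, y, z} : Finset V) ∈ H ∧ ({v, y, z} : Finset V) ∈ H then (1 : ℝ) else 0))
    (fun x y z => by positivity) η hη.le (a + 1) b c h
  obtain ⟨θ, hθ⟩ : ∃ θ, θ = ((η ^ (a + 1)) ^ b) ^ c := ⟨_, rfl⟩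
  rw [← hθ] at hcnt hn ⊢
  obtain ⟨N, hN⟩ : ∃ N, N = Fintype.card V := ⟨_, rfl⟩
  have hNpos : 0 < N := by rw [hN]; exact Fintype.card_pos_iff.2 ⟨v⟩
  have hnon := fun k => aux_noninj (V := V) k
  rw [← hN] at hcnt hn ⊢
  simp only [← hN] at hnon
  let Q : (Fin (a + 1) → V) × (Fin b → V) × (Fin c → V) → Prop := fun q =>
    (∀ k j i, q.1 i ≠ v ∧ ({q.1 i, q.2.1 j, q.2.2 k} : Finset V) ∈ H ∧
      ({v, q.2.1 j, q.2.2 k} : Finset V) ∈ H)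
  let S : Finset ((Fin (a + 1) → V) × (Fin b → V) × (Fin c → V)) :=
    Finset.univ.filter (fun q => Q q ∧ Function.Injective q.1 ∧ Function.Injective q.2.1 ∧
      Function.Injective q.2.2)
  let nI : ∀ k : ℕ, (Fin k → V) → ℝ := fun k f => if ¬ Function.Injective f then 1 else 0
  have hnI0 : ∀ k f, 0 ≤ nI k f := fun k f => by simp only [nI]; positivity
  have hnIs : ∀ k : ℕ, (∑ f : Fin k → V, nI k f) * N ≤ (k : ℝ) ^ 2 * (N : ℝ) ^ k := by
    intro k
    simp only [nI, Finset.sum_boole]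
    have hk := hnon k
    have hk' : (_ : ℝ) ≤ _ := Nat.cast_le (α := ℝ).2 hk
    push_cast at hk'
    convert hk'
  have hS : θ * (N : ℝ) ^ (a + 1 + b + c) ≤ S.card +
      (∑ f : Fin (a + 1) → V, ∑ g : Fin b → V, ∑ h : Fin c → V,
        (nI _ f + nI _ g + nI _ h)) := by
    refine hcnt.trans ?_
    have hSc : (S.card : ℝ) = ∑ f : Fin (a + 1) → V, ∑ g : Fin b → V, ∑ h : Fin c → V,
        (if (f, g, h) ∈ S then (1 : ℝ) else 0) := by
      have : (S.card : ℝ) = ∑ q, (if q ∈ S then (1 : ℝ) else 0) := by simp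
      rw [this]
      simp only [Fintype.sum_prod_type]
    rw [hSc, ← Finset.sum_add_distrib]
    refine Finset.sum_le_sum fun f _ => ?_
    rw [← Finset.sum_add_distrib]
    refine Finset.sum_le_sum fun g _ => ?_
    rw [← Finset.sum_add_distrib]
    refine Finset.sum_le_sum fun h _ => ?_
    have p1 := hnI0 _ f
    have p2 := hnI0 _ g
    have p3 := hnI0 _ h
    have p4 : (0 : ℝ) ≤ (if (f, g, h) ∈ S then (1 : ℝ) else 0) := by positivity
    by_cases hQ : Q (f, g, h)
    · have : (∏ k, ∏ j, ∏ i, (if f i ≠ v ∧ ({f i, g j, h k} : Finset V) ∈ H ∧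
          ({v, g j, h k} : Finset V) ∈ H then (1 : ℝ) else 0)) = 1 :=
        Finset.prod_eq_one fun k _ => Finset.prod_eq_one fun j _ => Finset.prod_eq_one fun i _ =>
          if_pos (hQ k j i)
      rw [this]
      by_cases i1 : Function.Injective f
      · by_cases i2 : Function.Injective g
        · by_cases i3 : Function.Injective h
          · have : (f, g, h) ∈ S := Finset.mem_filter.2 ⟨Finset.mem_univ _, hQ, i1, i2, i3⟩
            rw [if_pos this]; linarith
          · have : nI _ h = 1 := if_pos i3
            linarith
        · have : nI _ g = 1 := if_pos i2
          linarith
      · have : nI _ f = 1 := if_pos i1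
        linarith
    · have : (∏ k, ∏ j, ∏ i, (if f i ≠ v ∧ ({f i, g j, h k} : Finset V) ∈ H ∧
          ({v, g j, h k} : Finset V) ∈ H then (1 : ℝ) else 0)) = 0 := by
        simp only [Q, not_forall] at hQ
        obtain ⟨k, j, i, hQ⟩ := hQ
        exact Finset.prod_eq_zero (Finset.mem_univ k) (Finset.prod_eq_zero (Finset.mem_univ j)
          (Finset.prod_eq_zero (Finset.mem_univ i) (if_neg hQ)))
      rw [this]; linarith
  have hsum : (∑ f : Fin (a + 1) → V, ∑ g : Fin b → V, ∑ h : Fin c → V,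
        (nI _ f + nI _ g + nI _ h)) = (∑ f, nI (a + 1) f) * N ^ b * N ^ c
        + N ^ (a + 1) * (∑ g, nI b g) * N ^ c + N ^ (a + 1) * N ^ b * (∑ h, nI c h) := by
    simp only [Finset.sum_add_distrib, Finset.sum_const, Finset.card_univ, Fintype.card_fun,
      Fintype.card_fin, ← hN, nsmul_eq_mul, ← Finset.mul_sum]
    push_cast
    ring
  have hNr : (0 : ℝ) < N := by exact_mod_cast hNpos
  have hS2 : θ / 2 * (N : ℝ) ^ (a + 1 + b + c) ≤ S.card := by
    rw [hsum] at hS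
    have q1 := hnIs (a + 1)
    have q2 := hnIs b
    have q3 := hnIs c
    have r1 : ((∑ f, nI (a + 1) f) * N) * (N ^ b * N ^ c) ≤
      (((a + 1 : ℕ) : ℝ) ^ 2 * (N : ℝ) ^ (a + 1)) * (N ^ b * N ^ c) :=
        mul_le_mul_of_nonneg_right q1 (by positivity)
    have r2 : ((∑ f, nI b f) * N) * (N ^ (a + 1) * N ^ c) ≤
      ((b : ℝ) ^ 2 * (N : ℝ) ^ b) * (N ^ (a + 1) * N ^ c) :=
        mul_le_mul_of_nonneg_right q2 (by positivity)
    have r3 : ((∑ f, nI c f) * N) * (N ^ (a + 1) * N ^ b) ≤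
      ((c : ℝ) ^ 2 * (N : ℝ) ^ c) * (N ^ (a + 1) * N ^ b) :=
        mul_le_mul_of_nonneg_right q3 (by positivity)
    have r4 := mul_le_mul_of_nonneg_right hn
      (show (0 : ℝ) ≤ N ^ (a + 1) * N ^ b * N ^ c by positivity)
    refine le_of_mul_le_mul_right ?_ hNr
    have r5 := mul_le_mul_of_nonneg_right hS hNr.le
    rw [pow_add, pow_add] at r5 ⊢
    linarith
  let φ : (Fin (a + 1) → V) × (Fin b → V) × (Fin c → V) → Finset V × Finset V × Finset V :=
    fun q => (insert v (Finset.univ.image (fun i : Fin a => q.1 i.succ)),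
      Finset.univ.image q.2.1, Finset.univ.image q.2.2)
  have hmap : ∀ q ∈ S, φ q ∈ {p : Finset V × Finset V × Finset V |
              p.1.card = a + 1 ∧ p.2.1.card = b ∧ p.2.2.card = c ∧
              Disjoint p.1 p.2.1 ∧ Disjoint p.1 p.2.2 ∧ Disjoint p.2.1 p.2.2 ∧
              (v ∈ p.1 ∨ v ∈ p.2.1 ∨ v ∈ p.2.2) ∧
              ∀ x ∈ p.1, ∀ y ∈ p.2.1, ∀ z ∈ p.2.2,
                ({x, y, z} : Finset V) ∈ H} := by
    rintro ⟨f, g, h⟩ hq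
    obtain ⟨hQ, i1, i2, i3⟩ := (Finset.mem_filter.1 hq).2
    simp only [Q] at hQ i1 i2 i3
    obtain ⟨A, hA⟩ : ∃ A, A = insert v (Finset.univ.image (fun i : Fin a => f i.succ)) := ⟨_, rfl⟩
    obtain ⟨B, hB⟩ : ∃ B, B = Finset.univ.image g := ⟨_, rfl⟩
    obtain ⟨C, hC⟩ : ∃ C, C = Finset.univ.image h := ⟨_, rfl⟩
    have hφ : φ (f, g, h) = (A, B, C) := by simp only [φ, hA, hB, hC]
    rw [hφ]
    have hall : ∀ x ∈ A, ∀ y ∈ B, ∀ z ∈ C, ({x, y, z} : Finset V) ∈ H := by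
      intro x hx y hy z hz
      rw [hA, Finset.mem_insert, Finset.mem_image] at hx
      rw [hB, Finset.mem_image] at hy
      rw [hC, Finset.mem_image] at hz
      obtain ⟨j, -, rfl⟩ := hy
      obtain ⟨k, -, rfl⟩ := hz
      rcases hx with rfl | ⟨i, -, rfl⟩
      · exact (hQ k j 0).2.2
      · exact (hQ k j i.succ).2.1
    have hd12 : ∀ x z : V, ({x, x, z} : Finset V) ∉ H := by
      intro x z hxz
      have h1 := hH _ hxz
      have h2 := Finset.card_le_two (a := x) (b := z)
      simp at h1
      omega
    have hd23 : ∀ x z : V, ({x, z, z} : Finset V) ∉ H := by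
      intro x z hxz
      have h1 := hH _ hxz
      have h2 := Finset.card_le_two (a := x) (b := z)
      simp at h1
      omega
    have hd13 : ∀ x z : V, ({x, z, x} : Finset V) ∉ H := by
      intro x z hxz
      rw [Finset.pair_comm] at hxz
      exact hd12 x z hxz
    have hBm : g ⟨0, hb⟩ ∈ B := by rw [hB]; exact Finset.mem_image_of_mem _ (Finset.mem_univ _)
    have hCm : h ⟨0, hc⟩ ∈ C := by rw [hC]; exact Finset.mem_image_of_mem _ (Finset.mem_univ _)
    have hAm : v ∈ A := by rw [hA]; exact Finset.mem_insert_self _ _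
    refine ⟨?_, ?_, ?_, ?_, ?_, ?_, Or.inl hAm, hall⟩
    · simp only
      rw [hA, Finset.card_insert_of_notMem, Finset.card_image_of_injective, Finset.card_univ,
        Fintype.card_fin]
      · exact i1.comp (Fin.succ_injective a)
      · intro hv
        obtain ⟨i, -, hi⟩ := Finset.mem_image.1 hv
        exact (hQ ⟨0, hc⟩ ⟨0, hb⟩ i.succ).1 hi
    · simp only
      rw [hB, Finset.card_image_of_injective _ i2, Finset.card_univ, Fintype.card_fin]
    · simp only
      rw [hC, Finset.card_image_of_injective _ i3, Finset.card_univ, Fintype.card_fin]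
    · exact Finset.disjoint_left.2 fun x hx hx' => hd12 x _ (hall x hx x hx' _ hCm)
    · exact Finset.disjoint_left.2 fun x hx hx' => hd13 x _ (hall x hx _ hBm x hx')
    · exact Finset.disjoint_left.2 fun x hx hx' => hd23 v _ (hall v hAm x hx x hx')
  obtain ⟨P, hP⟩ : ∃ P : Set (Finset V × Finset V × Finset V), P = {p : Finset V × Finset V × Finset V |
              p.1.card = a + 1 ∧ p.2.1.card = b ∧ p.2.2.card = c ∧
              Disjoint p.1 p.2.1 ∧ Disjoint p.1 p.2.2 ∧ Disjoint p.2.1 p.2.2 ∧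
              (v ∈ p.1 ∨ v ∈ p.2.1 ∨ v ∈ p.2.2) ∧
              ∀ x ∈ p.1, ∀ y ∈ p.2.1, ∀ z ∈ p.2.2,
                ({x, y, z} : Finset V) ∈ H} := ⟨_, rfl⟩
  have hPc : ∀ p ∈ P, p.1.card = a + 1 ∧ p.2.1.card = b ∧ p.2.2.card = c := by
    intro p hp
    rw [hP] at hp
    exact ⟨hp.1, hp.2.1, hp.2.2.1⟩
  rw [← hP] at hmap ⊢
  have hfin : P.Finite := Set.toFinite _
  have hfib := Finset.card_le_mul_card_image_of_maps_to (f := φ) (s := S) (t := hfin.toFinset)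
    (fun q hq => by rw [Set.Finite.mem_toFinset]; exact hmap q hq)
    (N * ((a + 1) ^ a * b ^ b * c ^ c)) (by
      rintro ⟨A, B, C⟩ hp
      rw [Set.Finite.mem_toFinset] at hp
      obtain ⟨cA, cB, cC⟩ := hPc _ hp
      simp only at cA cB cC
      have hsub : (S.filter (fun q => φ q = (A, B, C))) ⊆
          (Fintype.piFinset (Fin.cons (Finset.univ : Finset V) (fun _ : Fin a => A) :
            Fin (a + 1) → Finset V)) ×ˢ
          ((Fintype.piFinset (fun _ : Fin b => B)) ×ˢ (Fintype.piFinset (fun _ : Fin c => C))) := by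
        rintro ⟨f, g, h⟩ hq
        have hq := (Finset.mem_filter.1 hq).2
        simp only [φ, Prod.mk.injEq] at hq
        obtain ⟨rfl, rfl, rfl⟩ := hq
        simp only [Finset.mem_product, Fintype.mem_piFinset]
        refine ⟨?_, ?_, ?_⟩
        · intro i
          refine Fin.cases ?_ ?_ i
          · simp
          · intro i
            simp
        · intro j
          exact Finset.mem_image_of_mem _ (Finset.mem_univ _)
        · intro j
          exact Finset.mem_image_of_mem _ (Finset.mem_univ _)
      refine (Finset.card_le_card hsub).trans (le_of_eq ?_)
      rw [Finset.card_product, Finset.card_product, Fintype.card_piFinset, Fintype.card_piFinset,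
        Fintype.card_piFinset, Fin.prod_univ_succ]
      simp [cA, cB, cC, hN]
      ring)
  rw [← Set.ncard_eq_toFinset_card P hfin] at hfib
  have hfib' : (S.card : ℝ) ≤ N * (((a + 1) ^ a * b ^ b * c ^ c : ℕ) : ℝ) * P.ncard := by
    exact_mod_cast hfib
  refine le_of_mul_le_mul_right ?_ hNr
  calc _ = θ / 2 * (N : ℝ) ^ (a + 1 + b + c) := by ring
    _ ≤ _ := hS2
    _ ≤ _ := hfib'
    _ = _ := by ring

theorem min_degree_forces_Kabc (a b c : ℕ) (ha : 1 ≤ a) (hb : 1 ≤ b) (hc : 1 ≤ c)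
    (γ : ℝ) (hγ : 0 < γ) :
    ∃ η : ℝ, 0 < η ∧ ∃ n₀ : ℕ, ∀ n : ℕ, n₀ ≤ n →
      ∀ (V : Type) [Fintype V] [DecidableEq V], Fintype.card V = n →
      ∀ H : Finset (Finset V), (∀ e ∈ H, e.card = 3) →
      (∀ x : V, (6 - 4 * Real.sqrt 2 + γ) * ((n : ℝ) * ((n : ℝ) - 1) / 2)
          ≤ ((H.filter (fun e => x ∈ e)).card : ℝ)) →
      ∀ v : V,
        η * (n : ℝ) ^ (a + b + c - 1) ≤
          (({p : Finset V × Finset V × Finset V |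
              p.1.card = a ∧ p.2.1.card = b ∧ p.2.2.card = c ∧
              Disjoint p.1 p.2.1 ∧ Disjoint p.1 p.2.2 ∧ Disjoint p.2.1 p.2.2 ∧
              (v ∈ p.1 ∨ v ∈ p.2.1 ∨ v ∈ p.2.2) ∧
              ∀ x ∈ p.1, ∀ y ∈ p.2.1, ∀ z ∈ p.2.2,
                ({x, y, z} : Finset V) ∈ H}.ncard : ℝ)) := by
  obtain ⟨a, rfl⟩ : ∃ a', a = a' + 1 := ⟨a - 1, by omega⟩
  obtain ⟨ε, hε⟩ : ∃ ε, ε = min (γ / 4) (1 / 2) := ⟨_, rfl⟩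
  have hε0 : 0 < ε := by rw [hε]; positivity
  have hε1 : ε < 1 := by
    rw [hε]; exact (min_le_right _ _).trans_lt (by norm_num)
  have hεγ : ε ≤ γ / 4 := by rw [hε]; exact min_le_left _ _
  obtain ⟨D, hD⟩ : ∃ D, D = 6 - 4 * √2 + γ := ⟨_, rfl⟩
  have hs : √2 < 1.415 := by
    rw [Real.sqrt_lt' (by norm_num)]; norm_num
  have hD0 : 0 < D := by rw [hD]; linarith
  obtain ⟨η, hη⟩ : ∃ η, η = ε ^ 2 / 6 := ⟨_, rfl⟩
  have hη0 : 0 < η := by rw [hη]; positivity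
  obtain ⟨θ, hθ⟩ : ∃ θ, θ = ((η ^ (a + 1)) ^ b) ^ c := ⟨_, rfl⟩
  have hθ0 : 0 < θ := by rw [hθ]; positivity
  obtain ⟨K, hK⟩ : ∃ K, K = (((a + 1) ^ a * b ^ b * c ^ c : ℕ) : ℝ) := ⟨_, rfl⟩
  have hK0 : 0 < K := by rw [hK]; positivity
  obtain ⟨n1, hn1⟩ := exists_nat_ge
    (2 * (((a + 1 : ℕ) : ℝ) ^ 2 + (b : ℝ) ^ 2 + (c : ℝ) ^ 2) / θ)
  obtain ⟨n2, hn2⟩ := exists_nat_ge (D / (γ / 2))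
  obtain ⟨n3, hn3⟩ := exists_nat_ge (1 / η)
  refine ⟨θ / 2 / K, by positivity, n1 + n2 + n3, ?_⟩
  intro n hn V _ _ hV H hH hdeg v
  have c1 : (n1 : ℝ) ≤ n := by exact_mod_cast (by omega : n1 ≤ n)
  have c2 : (n2 : ℝ) ≤ n := by exact_mod_cast (by omega : n2 ≤ n)
  have c3 : (n3 : ℝ) ≤ n := by exact_mod_cast (by omega : n3 ≤ n)
  have d1 := hn1.trans c1
  have d2 := hn2.trans c2
  have d3 := hn3.trans c3
  rw [div_le_iff₀ (by positivity)] at d1 d2 d3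
  rw [← hD] at hdeg
  have key := aux_key (fun x y z : V => if ({x, y, z} : Finset V) ∈ H then (1 : ℝ) else 0)
    (fun x y z => by
      by_cases h : ({x, y, z} : Finset V) ∈ H
      · right; exact if_pos h
      · left; exact if_neg h)
    (fun x y z => by simp only [Finset.insert_comm x y])
    (fun x y z => by simp only [Finset.pair_comm y z])
    (D - γ / 2) ε hε0 hε1 (by rw [hD]; linarith)
    (by
      intro x
      have h1 := aux_deg H hH x
      have h2 : (2 : ℝ) * (H.filter (fun e => x ∈ e)).card ≤
        ((Finset.univ.filter (fun p : V × V => ({x, p.1, p.2} : Finset V) ∈ H)).card : ℝ) := by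
        exact_mod_cast h1
      have h3 : ((Finset.univ.filter (fun p : V × V => ({x, p.1, p.2} : Finset V) ∈ H)).card : ℝ)
        = ∑ y, ∑ z, if ({x, y, z} : Finset V) ∈ H then (1 : ℝ) else 0 := by
        rw [← Finset.sum_boole, Fintype.sum_prod_type]
      rw [← h3, hV]
      refine le_trans ?_ h2
      have h4 := hdeg x
      have h5 := mul_le_mul_of_nonneg_right d2 (Nat.cast_nonneg (α := ℝ) n)
      nlinarith)
    v
  have hF : η * (Fintype.card V : ℝ) ^ 3 ≤ ∑ x, ∑ y, ∑ z,
      (if x ≠ v ∧ ({x, y, z} : Finset V) ∈ H ∧ ({v, y, z} : Finset V) ∈ H then (1 : ℝ) else 0) := by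
    have h1 : (∑ x : V, ∑ y : V, ∑ z : V, (if ({x, y, z} : Finset V) ∈ H then (1 : ℝ) else 0) *
        (if ({v, y, z} : Finset V) ∈ H then (1 : ℝ) else 0)) ≤
        ∑ x : V, ∑ y : V, ∑ z : V, ((if x ≠ v ∧ ({x, y, z} : Finset V) ∈ H ∧
          ({v, y, z} : Finset V) ∈ H then (1 : ℝ) else 0) + (if x = v then 1 else 0)) := by
      refine Finset.sum_le_sum fun x _ => Finset.sum_le_sum fun y _ =>
        Finset.sum_le_sum fun z _ => ?_
      by_cases e1 : x = v <;> by_cases e2 : ({x, y, z} : Finset V) ∈ H <;>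
        by_cases e3 : ({v, y, z} : Finset V) ∈ H <;> simp [e1, e2, e3]
    have h2 : ∑ x : V, ∑ y : V, ∑ z : V, (if x = v then (1 : ℝ) else 0) = (n : ℝ) ^ 2 := by
      simp [hV, sq, ← Finset.mul_sum]
    simp only [Finset.sum_add_distrib] at h1
    rw [h2] at h1
    have h3 := key.trans h1
    rw [hV] at h3 ⊢
    have h5 := mul_le_mul_of_nonneg_right d3 (sq_nonneg (n : ℝ))
    have h6 : ε ^ 2 / 3 = 2 * η := by rw [hη]; ring
    rw [h6] at h3
    nlinarith
  have fin := aux_final H hH v a b c hb hc η hη0 hF (by rw [← hθ, hV]; linarith)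
  rw [← hθ, ← hK, hV] at fin
  have e : a + 1 + b + c - 1 = a + b + c := by omega
  rw [e, div_mul_eq_mul_div, div_le_iff₀ hK0]
  linarith
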